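/- arXiv:1302.5860 — 2 statements merged into one kernel-verified Lean document; each statement's English description precedes it below -/
import Mathlib

section
/- Assume random codes are permitted and assume R^P_U(D, inf) = R^P_U(D). Let D ≥ 0 and let the compound channel 𝒟 be capable of communicating the uniform X source to within distortion D under the permutation-invariant distortion function d = (d^{n'}). Then every rate R with 0 < R < R^P_U(D) is reliably achievable over 𝒟 with random codes (maximal error probability vanishing uniformly over k ∈ 𝒟). -/
/-!
Let `q` (`matchP`) be the largest probability, over reproductions `y`, that a uniform element of
the type class lies within distortion `D` of `y`. Both sides of the theorem are governed by `q`.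

*Source side.* The type class is one orbit of the permutation group and the distortion is
permutation invariant, so a uniformly random permutation of the maximizing `y` is within
distortion `D` of *each* source word with probability exactly `q` (`perm_average`). With `M'`
independent such permutations as a codebook, the excess-distortion probability is at most
`(1 - q) ^ M' ≤ exp (-q M')` (`exists_source_code`, `exists_uSrc`). For a rate
`R < R' < R^P_U(D) = R^P_U(D, inf)` this cannot have `liminf` zero, so `q M'` stays bounded, and
`M q → 0` for the smaller number `M` of messages at rate `R` (`tendsto_matchP`).

*Channel side.* Messages are mapped to `M` independent uniform elements of the type class, which
are sent through the given end-to-end code. The decoder looks for the unique codeword within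
distortion `D` of the reconstruction. The true codeword fails with probability at most `ω`, and
each other codeword is independent of the reconstruction and matches it with probability at most
`q`. The error for every message and every channel is at most `ω + M q` (`exists_channel_code`).
-/

/-!
Statement 0: Optimality of separation, direct part (Part I, Theorem 1, first half).
If the compound channel 𝒜 can communicate the i.i.d. X source to within distortion D
(probability-of-excess-distortion criterion, uniformly over k ∈ 𝒜, random codes allowed),
then every rate 0 < R < R^P_X(D) is reliably achievable over 𝒜 with random codes.
-/

open Finset Filter
open scoped ENNReal

noncomputable section

/-- `p` is a probability mass function on the finite type `α`. -/
def IsDist {α : Type} [Fintype α] (p : α → ℝ) : Prop :=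
  (∀ a, 0 ≤ p a) ∧ ∑ a, p a = 1

/-- A (general) channel with finite input alphabet `ℐ` and finite output alphabet `𝒪`:
for each block length `n` and each input block, a probability distribution on output blocks. -/
structure Channel (ℐ 𝒪 : Type) [Fintype ℐ] [Fintype 𝒪] where
  k : ∀ n : ℕ, (Fin n → ℐ) → (Fin n → 𝒪) → ℝ
  isChan : ∀ n ι, IsDist (k n ι)

/-- A block random encoder–decoder pair: a joint probability distribution on pairs of
deterministic maps (encoder `A → B`, decoder `C → E`). -/
structure RandCode (A B C E : Type) [Fintype A] [DecidableEq A] [Fintype B]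
    [Fintype C] [DecidableEq C] [Fintype E] where
  p : ((A → B) × (C → E)) → ℝ
  isDist : IsDist p

/-- Probability of the block `x` under the i.i.d. source with single-letter pmf `pX`. -/
def iidP {𝒳 : Type} (pX : 𝒳 → ℝ) (n : ℕ) (x : Fin n → 𝒳) : ℝ := ∏ t, pX (x t)

/-- The additive `n`-letter extension `d^n` of a single-letter distortion function. -/
def dPow {𝒳 𝒴 : Type} (d : 𝒳 → 𝒴 → ℝ) (n : ℕ) (x : Fin n → 𝒳) (y : Fin n → 𝒴) : ℝ :=
  ∑ t, d (x t) (y t)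

variable {𝒳 𝒴 ℐ 𝒪 : Type} [Fintype 𝒳] [DecidableEq 𝒳] [Fintype 𝒴]
  [Fintype ℐ] [Fintype 𝒪] [DecidableEq 𝒪]

/-- End-to-end probability that the normalized distortion exceeds `D`, for the i.i.d. `pX`
source passed through random code `ρ` and channel `k`, at block length `n`. -/
def e2eExcess (pX : 𝒳 → ℝ) (d : 𝒳 → 𝒴 → ℝ) (D : ℝ) (n : ℕ)
    (ρ : RandCode (Fin n → 𝒳) (Fin n → ℐ) (Fin n → 𝒪) (Fin n → 𝒴))
    (k : Channel ℐ 𝒪) : ℝ :=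
  ∑ ef, ρ.p ef * ∑ x, iidP pX n x * ∑ o, k.k n (ef.1 x) o *
    (if (n : ℝ) * D < dPow d n x (ef.2 o) then 1 else 0)

/-- The compound channel `𝒜` is capable of communicating the i.i.d. `pX` source to within
distortion `D`: there are random codes and `ω n → 0`, independent of `k ∈ 𝒜`, with
`Pr(d^n(X^n,Y^n)/n > D) ≤ ω n` for every `n` and every `k ∈ 𝒜`. -/
def CanCommunicate (𝒜 : Set (Channel ℐ 𝒪)) (pX : 𝒳 → ℝ) (d : 𝒳 → 𝒴 → ℝ) (D : ℝ) : Prop :=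
  ∃ ρ : ∀ n : ℕ, RandCode (Fin n → 𝒳) (Fin n → ℐ) (Fin n → 𝒪) (Fin n → 𝒴),
    ∃ ω : ℕ → ℝ, Tendsto ω atTop (nhds 0) ∧
      ∀ n : ℕ, ∀ k ∈ 𝒜, e2eExcess pX d D n (ρ n) k ≤ ω n

/-- Size of the message set `M^n_R = {1, …, 2^⌊nR⌋}`. -/
def nMsg (R : ℝ) (n : ℕ) : ℕ := 2 ^ ⌊(n : ℝ) * R⌋₊

/-- Probability of a decoding error for message `m` with random channel code `σ` over
channel `k` at block length `n` (the decoder may output the error symbol `none`). -/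
def chErr (R : ℝ) (n : ℕ)
    (σ : RandCode (Fin (nMsg R n)) (Fin n → ℐ) (Fin n → 𝒪) (Option (Fin (nMsg R n))))
    (k : Channel ℐ 𝒪) (m : Fin (nMsg R n)) : ℝ :=
  ∑ ef, σ.p ef * ∑ o, k.k n (ef.1 m) o * (if ef.2 o = some m then 0 else 1)

/-- Rate `R` is reliably achievable over the compound channel `𝒜` with random codes:
there are random channel codes and `δ n → 0`, independent of `k ∈ 𝒜`, such that the maximal
probability of error is at most `δ n` for every `n`, every `k ∈ 𝒜`, and every message. -/
def ReliablyAchievable (𝒜 : Set (Channel ℐ 𝒪)) (R : ℝ) : Prop :=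
  ∃ σ : ∀ n : ℕ, RandCode (Fin (nMsg R n)) (Fin n → ℐ) (Fin n → 𝒪) (Option (Fin (nMsg R n))),
    ∃ δ : ℕ → ℝ, Tendsto δ atTop (nhds 0) ∧
      ∀ n : ℕ, ∀ k ∈ 𝒜, ∀ m, chErr R n (σ n) k m ≤ δ n

/-- Total count `n₀ = ∑ a, c a` of a composition `c` (so that `p_X a = c a / n₀`). -/
def nn0 {𝒳 : Type} [Fintype 𝒳] (c : 𝒳 → ℕ) : ℕ := ∑ a, c a

/-- The type class `𝒰^{n'}` at block length `n' = n₀ n`: sequences whose empirical counts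
are exactly `n * c a` for every letter `a` (i.e. exact type `p_X`). -/
def typeCl {𝒳 : Type} [Fintype 𝒳] [DecidableEq 𝒳] (c : 𝒳 → ℕ) (n : ℕ) :
    Finset (Fin (nn0 c * n) → 𝒳) :=
  Finset.univ.filter fun u => ∀ a, (Finset.univ.filter fun t => u t = a).card = n * c a

/-- End-to-end probability of excess distortion for the uniform `X` source (uniform on the
type class) through random code `ρ` and channel `k`, at block length `n' = n₀ n`. -/
def uExcess (c : 𝒳 → ℕ) (d : ∀ m : ℕ, (Fin m → 𝒳) → (Fin m → 𝒴) → ℝ) (D : ℝ) (n : ℕ)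
    (ρ : RandCode (Fin (nn0 c * n) → 𝒳) (Fin (nn0 c * n) → ℐ)
      (Fin (nn0 c * n) → 𝒪) (Fin (nn0 c * n) → 𝒴))
    (k : Channel ℐ 𝒪) : ℝ :=
  (∑ u ∈ typeCl c n, ∑ ef, ρ.p ef *
      ∑ o, k.k (nn0 c * n) (ef.1 u) o *
        (if ((nn0 c * n : ℕ) : ℝ) * D < d (nn0 c * n) u (ef.2 o) then 1 else 0))
    / ((typeCl c n).card : ℝ)

/-- The compound channel `𝒟` is capable of communicating the uniform `X` source to within
distortion `D`: there are random codes and `ω_{n'} → 0`, independent of `k ∈ 𝒟`, with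
excess-distortion probability `≤ ω_{n'}` at every block length `n' = n₀ n` and every `k ∈ 𝒟`. -/
def UCanCommunicate (𝒟 : Set (Channel ℐ 𝒪)) (c : 𝒳 → ℕ)
    (d : ∀ m : ℕ, (Fin m → 𝒳) → (Fin m → 𝒴) → ℝ) (D : ℝ) : Prop :=
  ∃ ρ : ∀ n : ℕ, RandCode (Fin (nn0 c * n) → 𝒳) (Fin (nn0 c * n) → ℐ)
      (Fin (nn0 c * n) → 𝒪) (Fin (nn0 c * n) → 𝒴),
    ∃ ω : ℕ → ℝ, Tendsto ω atTop (nhds 0) ∧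
      ∀ n : ℕ, 1 ≤ n → ∀ k ∈ 𝒟, uExcess c d D n (ρ n) k ≤ ω n

/-- Rate `R` is reliably achievable over `𝒟` with random codes, block lengths restricted to
multiples `n' = n₀ n`. -/
def UReliablyAchievable (𝒟 : Set (Channel ℐ 𝒪)) (c : 𝒳 → ℕ) (R : ℝ) : Prop :=
  ∃ σ : ∀ n : ℕ, RandCode (Fin (nMsg R (nn0 c * n))) (Fin (nn0 c * n) → ℐ)
      (Fin (nn0 c * n) → 𝒪) (Option (Fin (nMsg R (nn0 c * n)))),
    ∃ δ : ℕ → ℝ, Tendsto δ atTop (nhds 0) ∧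
      ∀ n : ℕ, 1 ≤ n → ∀ k ∈ 𝒟, ∀ m, chErr R (nn0 c * n) (σ n) k m ≤ δ n

/-- Probability of excess distortion of a random rate-`R` source code for the uniform `X`
source at block length `n' = n₀ n`. -/
def uSrcExcess (c : 𝒳 → ℕ) (d : ∀ m : ℕ, (Fin m → 𝒳) → (Fin m → 𝒴) → ℝ) (D R : ℝ) (n : ℕ)
    (τ : RandCode (Fin (nn0 c * n) → 𝒳) (Fin (nMsg R (nn0 c * n)))
      (Fin (nMsg R (nn0 c * n))) (Fin (nn0 c * n) → 𝒴)) : ℝ :=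
  (∑ u ∈ typeCl c n, ∑ ef, τ.p ef *
      (if ((nn0 c * n : ℕ) : ℝ) * D < d (nn0 c * n) u (ef.2 (ef.1 u)) then 1 else 0))
    / ((typeCl c n).card : ℝ)

/-- `R^P_U(D)`: infimum (in `ℝ≥0∞`) of rates `R > 0` at which the uniform `X` source can be
coded to within distortion `D` under the (limit) probability-of-excess-distortion criterion. -/
def RPU (c : 𝒳 → ℕ) (d : ∀ m : ℕ, (Fin m → 𝒳) → (Fin m → 𝒴) → ℝ) (D : ℝ) : ℝ≥0∞ :=
  sInf {r : ℝ≥0∞ | ∃ R : ℝ, 0 < R ∧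
    (∃ τ : ∀ n : ℕ, RandCode (Fin (nn0 c * n) → 𝒳) (Fin (nMsg R (nn0 c * n)))
        (Fin (nMsg R (nn0 c * n))) (Fin (nn0 c * n) → 𝒴),
      Tendsto (fun n => uSrcExcess c d D R n (τ n)) atTop (nhds 0)) ∧
    r = ENNReal.ofReal R}

/-- `R^P_U(D, inf)`: infimum (in `ℝ≥0∞`) of rates `R > 0` at which the uniform `X` source can
be coded to within distortion `D` under the `inf` probability-of-excess-distortion criterion
(`liminf` of the excess-distortion probabilities equal to `0`). -/
def RPUinf (c : 𝒳 → ℕ) (d : ∀ m : ℕ, (Fin m → 𝒳) → (Fin m → 𝒴) → ℝ) (D : ℝ) : ℝ≥0∞ :=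
  sInf {r : ℝ≥0∞ | ∃ R : ℝ, 0 < R ∧
    (∃ τ : ∀ n : ℕ, RandCode (Fin (nn0 c * n) → 𝒳) (Fin (nMsg R (nn0 c * n)))
        (Fin (nMsg R (nn0 c * n))) (Fin (nn0 c * n) → 𝒴),
      Filter.liminf (fun n => uSrcExcess c d D R n (τ n)) atTop = 0) ∧
    r = ENNReal.ofReal R}

/-! ### Random codes from finite probability spaces -/

/-- The random code obtained by drawing `w` from the finite probability space `(Ω, P)` and using
the deterministic pair `g w`, i.e. the push-forward of `P` along `g`. -/
def RandCode.ofMap {A B C E Ω : Type} [Fintype A] [DecidableEq A] [Fintype B]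
    [Fintype C] [DecidableEq C] [Fintype E] [Fintype Ω] (P : Ω → ℝ) (hP : IsDist P)
    (g : Ω → (A → B) × (C → E)) : RandCode A B C E where
  p := by
    classical
    exact fun ef => ∑ w, if g w = ef then P w else 0
  isDist := by
    classical
    refine ⟨fun ef => Finset.sum_nonneg fun w _ => ?_, ?_⟩
    · split_ifs
      · exact hP.1 w
      · exact le_rfl
    · rw [Finset.sum_comm]
      simpa using hP.2

lemma RandCode.sum_ofMap {A B C E Ω : Type} [Fintype A] [DecidableEq A] [Fintype B]
    [Fintype C] [DecidableEq C] [Fintype E] [Fintype Ω] (P : Ω → ℝ) (hP : IsDist P)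
    (g : Ω → (A → B) × (C → E)) (F : (A → B) × (C → E) → ℝ) :
    ∑ ef, (RandCode.ofMap P hP g).p ef * F ef = ∑ w, P w * F (g w) := by
  classical
  simp only [RandCode.ofMap, Finset.sum_mul]
  rw [Finset.sum_comm]
  refine Finset.sum_congr rfl fun w _ => ?_
  simp [ite_mul]

lemma isDist_pi {ι α : Type} [Fintype ι] [DecidableEq ι] [Fintype α] {P : α → ℝ}
    (hP : IsDist P) : IsDist fun w : ι → α => ∏ i, P (w i) := by
  refine ⟨fun w => Finset.prod_nonneg fun i _ => hP.1 _, ?_⟩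
  have h := Finset.prod_univ_sum (fun _ : ι => (Finset.univ : Finset α)) (fun _ a => P a)
  simpa [hP.2] using h.symm

/-- Under the i.i.d. law `∏ j, P (w j)`, coordinate `i` is independent of the others. -/
lemma sum_pi_split {ι α : Type} [Fintype ι] [DecidableEq ι] [Fintype α] (P : α → ℝ) (i : ι)
    (H : α → ({j // j ≠ i} → α) → ℝ) :
    ∑ w : ι → α, (∏ j, P (w j)) * H (w i) (fun j => w j)
      = ∑ a, P a * ∑ v : {j // j ≠ i} → α, (∏ j, P (v j)) * H a v := by
  simp only [Finset.mul_sum]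
  rw [← Fintype.sum_prod_type' (fun a (v : {j // j ≠ i} → α) => P a * ((∏ j, P (v j)) * H a v))]
  refine Fintype.sum_equiv (Equiv.funSplitAt i α) _ _ fun w => ?_
  have h : ∏ j, P (w j) = P (w i) * ∏ j : {j // j ≠ i}, P (w j) := by
    rw [Fintype.prod_eq_mul_prod_compl i, Finset.prod_subtype (p := fun j => j ≠ i) ({i}ᶜ : Finset ι) (by simp)]
  simp only [Equiv.funSplitAt_apply]
  rw [h, mul_assoc]

/-- Each coordinate of an i.i.d. family has law `P`. -/
lemma sum_pi_one {ι α : Type} [Fintype ι] [DecidableEq ι] [Fintype α] {P : α → ℝ}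
    (hP : IsDist P) (i : ι) (H : α → ℝ) :
    ∑ w : ι → α, (∏ j, P (w j)) * H (w i) = ∑ a, P a * H a := by
  rw [sum_pi_split P i (fun a _ => H a)]
  refine Finset.sum_congr rfl fun a _ => ?_
  rw [← Finset.sum_mul, (isDist_pi hP).2, one_mul]

/-- Two distinct coordinates of an i.i.d. family have joint law `P ⊗ P`. -/
lemma sum_pi_two {ι α : Type} [Fintype ι] [DecidableEq ι] [Fintype α] {P : α → ℝ}
    (hP : IsDist P) {i j : ι} (hij : j ≠ i) (H : α → α → ℝ) :
    ∑ w : ι → α, (∏ l, P (w l)) * H (w i) (w j) = ∑ a, P a * ∑ b, P b * H a b := by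
  rw [sum_pi_split P i (fun a v => H a (v ⟨j, hij⟩))]
  refine Finset.sum_congr rfl fun a _ => ?_
  rw [sum_pi_one hP (⟨j, hij⟩ : {j // j ≠ i}) (H a)]

/-! ### The two random-coding bounds -/

/-- Unique-match decoding: the message whose codeword is the only one compatible with
the reconstruction `y`, and the error symbol if there is no such message. -/
def uniqDec {X Y : Type} {M : ℕ} (bad : X → Y → Prop) (w : Fin M → X) (y : Y) :
    Option (Fin M) := by
  classical
  exact if h : ∃ m, ¬ bad (w m) y ∧ ∀ m', ¬ bad (w m') y → m' = m then some h.choose else none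

/-- A decoding error for `m` forces its own codeword to fail or another one to match. -/
lemma uniqDec_err {X Y : Type} {M : ℕ} (bad : X → Y → Prop) [∀ x y, Decidable (bad x y)]
    (w : Fin M → X) (y : Y) (m : Fin M) :
    (if uniqDec bad w y = some m then (0 : ℝ) else 1)
      ≤ (if bad (w m) y then 1 else 0)
        + ∑ m' ∈ Finset.univ.erase m, (if bad (w m') y then 0 else 1) := by
  have hnn : ∀ m' ∈ Finset.univ.erase m, (0 : ℝ) ≤ (if bad (w m') y then 0 else 1) := by
    intro m' _; split_ifs <;> norm_num
  have hs := Finset.sum_nonneg hnn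
  by_cases h1 : bad (w m) y
  · rw [if_pos h1]
    split_ifs <;> linarith
  rw [if_neg h1]
  by_cases h2 : ∃ m', m' ≠ m ∧ ¬ bad (w m') y
  · obtain ⟨m', hm, hb⟩ := h2
    have := Finset.single_le_sum hnn (Finset.mem_erase.2 ⟨hm, Finset.mem_univ m'⟩)
    rw [if_neg hb] at this
    split_ifs <;> linarith
  · push Not at h2
    have hex : ∃ m, ¬ bad (w m) y ∧ ∀ m', ¬ bad (w m') y → m' = m :=
      ⟨m, h1, fun m' hm' => by_contra fun hne => hm' (h2 m' hne)⟩
    have : uniqDec bad w y = some m := by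
      rw [uniqDec, dif_pos hex]
      exact congrArg some (hex.choose_spec.2 m h1).symm
    rw [if_pos this]
    linarith

/-- Channel coding through an end-to-end code `ρ`: `M` codewords are drawn i.i.d. from `P0` and
sent through `ρ`; decoding finds the unique codeword not in the relation `bad` with the
reconstruction. The error is at most the end-to-end failure probability plus `M` times the
largest probability `q` that an independent codeword is compatible with a reconstruction. -/
lemma exists_channel_code {X I O Y : Type} [Fintype X] [DecidableEq X] [Fintype I]
    [Fintype O] [DecidableEq O] [Fintype Y] (P0 : X → ℝ) (hP0 : IsDist P0)
    (bad : X → Y → Prop) [∀ x y, Decidable (bad x y)] (ρ : RandCode X I O Y) (M : ℕ) (q : ℝ)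
    (hq0 : 0 ≤ q) (hq : ∀ y, ∑ x, P0 x * (if bad x y then 0 else 1) ≤ q) :
    ∃ σ : RandCode (Fin M) I O (Option (Fin M)), ∀ K : I → O → ℝ, (∀ i, IsDist (K i)) → ∀ m,
      ∑ ef, σ.p ef * ∑ o, K (ef.1 m) o * (if ef.2 o = some m then 0 else 1)
        ≤ (∑ x, P0 x * ∑ ef, ρ.p ef * ∑ o, K (ef.1 x) o * (if bad x (ef.2 o) then 1 else 0))
          + M * q := by
  classical
  let P : ((X → I) × (O → Y)) × (Fin M → X) → ℝ := fun z => ρ.p z.1 * ∏ j, P0 (z.2 j)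
  have hP : IsDist P := by
    refine ⟨fun z => mul_nonneg (ρ.isDist.1 _) ((isDist_pi hP0).1 _), ?_⟩
    rw [Fintype.sum_prod_type]
    simp only [P, ← Finset.mul_sum, (isDist_pi hP0).2, mul_one, ρ.isDist.2]
  refine ⟨RandCode.ofMap P hP fun z =>
    (fun m => z.1.1 (z.2 m), fun o => uniqDec bad z.2 (z.1.2 o)), fun K hK m => ?_⟩
  rw [RandCode.sum_ofMap]
  rw [Fintype.sum_prod_type]
  simp only [P, mul_assoc, ← Finset.mul_sum]
  have key : ∀ ef : (X → I) × (O → Y),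
      ∑ w : Fin M → X, (∏ j, P0 (w j)) *
        ∑ o, K (ef.1 (w m)) o * (if uniqDec bad w (ef.2 o) = some m then 0 else 1)
      ≤ (∑ x, P0 x * ∑ o, K (ef.1 x) o * (if bad x (ef.2 o) then 1 else 0)) + M * q := by
    intro ef
    calc _ ≤ ∑ w : Fin M → X, (∏ j, P0 (w j)) *
          ((∑ o, K (ef.1 (w m)) o * (if bad (w m) (ef.2 o) then 1 else 0))
          + ∑ m' ∈ Finset.univ.erase m,
              ∑ o, K (ef.1 (w m)) o * (if bad (w m') (ef.2 o) then 0 else 1)) := by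
          refine Finset.sum_le_sum fun w _ =>
            mul_le_mul_of_nonneg_left ?_ ((isDist_pi hP0).1 w)
          rw [Finset.sum_comm, ← Finset.sum_add_distrib]
          refine Finset.sum_le_sum fun o _ => ?_
          rw [← Finset.mul_sum, ← mul_add]
          exact mul_le_mul_of_nonneg_left (uniqDec_err bad w (ef.2 o) m) ((hK _).1 o)
      _ = (∑ x, P0 x * ∑ o, K (ef.1 x) o * (if bad x (ef.2 o) then 1 else 0))
          + ∑ m' ∈ Finset.univ.erase m, ∑ x, P0 x * ∑ x', P0 x' *
              ∑ o, K (ef.1 x) o * (if bad x' (ef.2 o) then 0 else 1) := by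
          simp only [mul_add, Finset.sum_add_distrib]
          congr 1
          · exact sum_pi_one hP0 m
              (fun x => ∑ o, K (ef.1 x) o * (if bad x (ef.2 o) then 1 else 0))
          · simp only [Finset.mul_sum (Finset.univ.erase m)]
            rw [Finset.sum_comm]
            refine Finset.sum_congr rfl fun m' hm' => ?_
            exact sum_pi_two hP0 (Finset.ne_of_mem_erase hm')
              (fun x x' => ∑ o, K (ef.1 x) o * (if bad x' (ef.2 o) then 0 else 1))
      _ ≤ _ := by
          gcongr
          have hone : ∀ m' ∈ Finset.univ.erase m, ∑ x, P0 x * ∑ x', P0 x' *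
              ∑ o, K (ef.1 x) o * (if bad x' (ef.2 o) then 0 else 1) ≤ q := by
            intro m' _
            have hx : ∀ x, ∑ x', P0 x' *
                ∑ o, K (ef.1 x) o * (if bad x' (ef.2 o) then 0 else 1) ≤ q := by
              intro x
              calc _ = ∑ o, K (ef.1 x) o *
                    ∑ x', P0 x' * (if bad x' (ef.2 o) then 0 else 1) := by
                    simp only [Finset.mul_sum]
                    rw [Finset.sum_comm]
                    refine Finset.sum_congr rfl fun o _ => Finset.sum_congr rfl fun x' _ => ?_
                    ring
                _ ≤ ∑ o, K (ef.1 x) o * q :=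
                    Finset.sum_le_sum fun o _ =>
                      mul_le_mul_of_nonneg_left (hq _) ((hK _).1 o)
                _ = q := by rw [← Finset.sum_mul, (hK _).2, one_mul]
            calc _ ≤ ∑ x, P0 x * q :=
                    Finset.sum_le_sum fun x _ => mul_le_mul_of_nonneg_left (hx x) (hP0.1 x)
              _ = q := by rw [← Finset.sum_mul, hP0.2, one_mul]
          refine (Finset.sum_le_card_nsmul _ _ _ hone).trans ?_
          rw [nsmul_eq_mul]
          refine mul_le_mul_of_nonneg_right ?_ hq0
          exact_mod_cast (Finset.card_le_univ _).trans (by simp)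
  calc _ ≤ ∑ ef, ρ.p ef *
        ((∑ x, P0 x * ∑ o, K (ef.1 x) o * (if bad x (ef.2 o) then 1 else 0)) + M * q) :=
        Finset.sum_le_sum fun ef _ => mul_le_mul_of_nonneg_left (key ef) (ρ.isDist.1 ef)
    _ = _ := by
        simp only [mul_add, Finset.sum_add_distrib]
        rw [← Finset.sum_mul, ρ.isDist.2, one_mul]
        congr 1
        simp only [Finset.mul_sum]
        rw [Finset.sum_comm]
        refine Finset.sum_congr rfl fun x _ => Finset.sum_congr rfl fun ef _ =>
          Finset.sum_congr rfl fun o _ => ?_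
        ring

/-- Source coding by random covering: `M` reproductions are drawn i.i.d. as `y w`, `w ∼ P`, and
the encoder picks an acceptable one whenever there is one. -/
lemma exists_source_code {X Y Ω : Type} [Fintype X] [DecidableEq X] [Fintype Y] [Fintype Ω]
    (P : Ω → ℝ) (hP : IsDist P) (y : Ω → Y) (bad : X → Y → Prop)
    [∀ x y, Decidable (bad x y)] (M : ℕ) (hM : 0 < M) :
    ∃ τ : RandCode X (Fin M) (Fin M) Y, ∀ x,
      ∑ ef, τ.p ef * (if bad x (ef.2 (ef.1 x)) then 1 else 0)
        ≤ (∑ w, P w * (if bad x (y w) then 1 else 0)) ^ M := by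
  classical
  let enc : (Fin M → Ω) → X → Fin M := fun w x =>
    if h : ∃ j, ¬ bad x (y (w j)) then h.choose else ⟨0, hM⟩
  refine ⟨RandCode.ofMap _ (isDist_pi (ι := Fin M) hP) fun w => (enc w, fun j => y (w j)),
    fun x => ?_⟩
  rw [RandCode.sum_ofMap, Fintype.sum_pow]
  refine Finset.sum_le_sum fun w _ => ?_
  rw [Finset.prod_mul_distrib]
  refine mul_le_mul_of_nonneg_left ?_ ((isDist_pi hP).1 w)
  by_cases h : ∃ j, ¬ bad x (y (w j))
  · have henc : enc w x = h.choose := dif_pos h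
    simp only [henc]
    rw [if_neg h.choose_spec]
    exact Finset.prod_nonneg fun j _ => by split_ifs <;> norm_num
  · push Not at h
    simp [h]

/-! ### The type class and permutations -/

lemma typeCl_nonempty {A : Type} [Fintype A] [DecidableEq A] (c : A → ℕ) (n : ℕ) :
    (typeCl c n).Nonempty := by
  have e : Fin (nn0 c * n) ≃ Σ a, Fin (n * c a) := Fintype.equivOfCardEq (by
    simp [nn0, Finset.mul_sum, mul_comm])
  refine ⟨fun t => (e t).1, ?_⟩
  simp only [typeCl, Finset.mem_filter, Finset.mem_univ, true_and]
  intro a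
  have : Fintype.card {t // (e t).1 = a} = n * c a := by
    rw [Fintype.card_congr ((e.subtypeEquiv (q := fun s => s.1 = a) fun t => Iff.rfl).trans
      (Equiv.sigmaSubtype a)), Fintype.card_fin]
  rw [← this, Fintype.card_subtype]

/-- The type class is a single orbit of the permutation group. -/
lemma typeCl_trans {A : Type} [Fintype A] [DecidableEq A] (c : A → ℕ) (n : ℕ)
    {u v : Fin (nn0 c * n) → A} (hu : u ∈ typeCl c n) (hv : v ∈ typeCl c n) :
    ∃ π : Equiv.Perm (Fin (nn0 c * n)), v = u ∘ π := by
  simp only [typeCl, Finset.mem_filter, Finset.mem_univ, true_and] at hu hv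
  have e : ∀ a, {t // v t = a} ≃ {t // u t = a} := fun a =>
    Fintype.equivOfCardEq (by rw [Fintype.card_subtype, Fintype.card_subtype, hu, hv])
  exact ⟨Equiv.ofFiberEquiv e, funext fun t => (Equiv.ofFiberEquiv_map e t).symm⟩

lemma typeCl_comp {A : Type} [Fintype A] [DecidableEq A] (c : A → ℕ) (n : ℕ)
    (u : Fin (nn0 c * n) → A) (π : Equiv.Perm (Fin (nn0 c * n))) :
    u ∘ π ∈ typeCl c n ↔ u ∈ typeCl c n := by
  simp only [typeCl, Finset.mem_filter, Finset.mem_univ, true_and]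
  refine forall_congr' fun a => ?_
  have : (Finset.univ.filter fun t => (u ∘ π) t = a).card
      = (Finset.univ.filter fun t => u t = a).card := by
    refine Finset.card_bij (fun t _ => π t) ?_ ?_ ?_
    · simp
    · intro a _ b _ h; exact π.injective h
    · intro b hb; exact ⟨π.symm b, by simpa using hb, by simp⟩
  rw [this]

/-- For an invariant `B`, averaging `B u` over the permutations of a fixed `y` is the same as
averaging `B · y` over the type class of `u`. -/
lemma perm_average {A Y : Type} [Fintype A] [DecidableEq A] (c : A → ℕ) (n : ℕ)
    (B : (Fin (nn0 c * n) → A) → (Fin (nn0 c * n) → Y) → ℝ)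
    (hB : ∀ (π : Equiv.Perm (Fin (nn0 c * n))) x y, B (x ∘ π) (y ∘ π) = B x y)
    (y : Fin (nn0 c * n) → Y) {u : Fin (nn0 c * n) → A} (hu : u ∈ typeCl c n) :
    ∑ π : Equiv.Perm (Fin (nn0 c * n)),
        (Fintype.card (Equiv.Perm (Fin (nn0 c * n))) : ℝ)⁻¹ * B u (y ∘ π)
      = (∑ v ∈ typeCl c n, B v y) / ((typeCl c n).card : ℝ) := by
  have hconst : ∀ v ∈ typeCl c n, ∑ π : Equiv.Perm (Fin (nn0 c * n)), B v (y ∘ π)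
      = ∑ π : Equiv.Perm (Fin (nn0 c * n)), B u (y ∘ π) := by
    intro v hv
    obtain ⟨s, rfl⟩ := typeCl_trans c n hu hv
    symm
    refine Fintype.sum_equiv (Equiv.mulRight s) _ _ fun π => ?_
    exact (hB s u (y ∘ π)).symm
  have hflip : ∀ π : Equiv.Perm (Fin (nn0 c * n)),
      ∑ v ∈ typeCl c n, B v (y ∘ π) = ∑ v ∈ typeCl c n, B v y := by
    intro π
    symm
    refine Finset.sum_bij (fun v _ => v ∘ π) ?_ ?_ ?_ ?_
    · intro v hv; exact (typeCl_comp c n v π).2 hv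
    · intro v _ v' _ h
      exact π.surjective.injective_comp_right h
    · intro v hv
      exact ⟨v ∘ π.symm, (typeCl_comp c n v π.symm).2 hv, by ext t; simp⟩
    · intro v _; exact (hB π v y).symm
  have hdouble : ((typeCl c n).card : ℝ) * ∑ π : Equiv.Perm (Fin (nn0 c * n)), B u (y ∘ π)
      = (Fintype.card (Equiv.Perm (Fin (nn0 c * n))) : ℝ) * ∑ v ∈ typeCl c n, B v y := by
    rw [← nsmul_eq_mul, ← Finset.sum_const, ← Finset.sum_congr rfl hconst, Finset.sum_comm,
      Finset.sum_congr rfl fun π _ => hflip π]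
    simp
  have hN : ((typeCl c n).card : ℝ) ≠ 0 := by
    exact_mod_cast (typeCl_nonempty c n).card_pos.ne'
  have hP : (Fintype.card (Equiv.Perm (Fin (nn0 c * n))) : ℝ) ≠ 0 := by
    exact_mod_cast Fintype.card_ne_zero
  rw [← Finset.mul_sum]
  field_simp
  linarith

/-! ### The matching probability and its decay -/

/-- The uniform distribution on the type class. -/
def uDist {A : Type} [Fintype A] [DecidableEq A] (c : A → ℕ) (n : ℕ)
    (u : Fin (nn0 c * n) → A) : ℝ :=
  if u ∈ typeCl c n then ((typeCl c n).card : ℝ)⁻¹ else 0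

lemma sum_uDist {A : Type} [Fintype A] [DecidableEq A] (c : A → ℕ) (n : ℕ)
    (F : (Fin (nn0 c * n) → A) → ℝ) :
    ∑ u, uDist c n u * F u = (∑ u ∈ typeCl c n, F u) / ((typeCl c n).card : ℝ) := by
  simp only [uDist, ite_mul, zero_mul]
  rw [Finset.sum_ite_mem, Finset.univ_inter, ← Finset.mul_sum, div_eq_inv_mul]

lemma isDist_uDist {A : Type} [Fintype A] [DecidableEq A] (c : A → ℕ) (n : ℕ) :
    IsDist (uDist c n) := by
  constructor
  · intro u; rw [uDist]; split_ifs <;> positivity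
  · have h := sum_uDist c n fun _ => 1
    have hN : ((typeCl c n).card : ℝ) ≠ 0 := by
      exact_mod_cast (typeCl_nonempty c n).card_pos.ne'
    simpa [hN] using h

/-- The largest probability, over reproductions `y`, that a uniform element of the type class is
within distortion `D` of `y`. It is `0` when there are no reproductions. -/
def matchP {A B : Type} [Fintype A] [DecidableEq A] (c : A → ℕ)
    (d : ∀ m : ℕ, (Fin m → A) → (Fin m → B) → ℝ) (D : ℝ) (n : ℕ) : ℝ :=
  ⨆ y, ∑ u, uDist c n u * (if ((nn0 c * n : ℕ) : ℝ) * D < d (nn0 c * n) u y then 0 else 1)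

lemma match_nonneg {A B : Type} [Fintype A] [DecidableEq A] (c : A → ℕ)
    (d : ∀ m : ℕ, (Fin m → A) → (Fin m → B) → ℝ) (D : ℝ) (n : ℕ) (y : Fin (nn0 c * n) → B) :
    0 ≤ ∑ u, uDist c n u *
      (if ((nn0 c * n : ℕ) : ℝ) * D < d (nn0 c * n) u y then 0 else 1) :=
  Finset.sum_nonneg fun u _ =>
    mul_nonneg ((isDist_uDist c n).1 u) (by split_ifs <;> norm_num)

lemma matchP_nonneg {A B : Type} [Fintype A] [DecidableEq A] (c : A → ℕ)
    (d : ∀ m : ℕ, (Fin m → A) → (Fin m → B) → ℝ) (D : ℝ) (n : ℕ) : 0 ≤ matchP c d D n :=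
  Real.iSup_nonneg fun y => match_nonneg c d D n y

lemma le_matchP {A B : Type} [Fintype A] [DecidableEq A] [Fintype B] (c : A → ℕ)
    (d : ∀ m : ℕ, (Fin m → A) → (Fin m → B) → ℝ) (D : ℝ) (n : ℕ) (y : Fin (nn0 c * n) → B) :
    ∑ u, uDist c n u * (if ((nn0 c * n : ℕ) : ℝ) * D < d (nn0 c * n) u y then 0 else 1)
      ≤ matchP c d D n :=
  le_ciSup (f := fun y => ∑ u, uDist c n u *
    (if ((nn0 c * n : ℕ) : ℝ) * D < d (nn0 c * n) u y then (0 : ℝ) else 1))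
    (Set.finite_range _).bddAbove y

/-- Source codes built from random permutations of an optimal reproduction fail with probability
at most `(1 - matchP) ^ M`. -/
lemma exists_uSrc {A B : Type} [Fintype A] [DecidableEq A] [Fintype B] [Nonempty B] (c : A → ℕ)
    (d : ∀ m : ℕ, (Fin m → A) → (Fin m → B) → ℝ)
    (hperm : ∀ (m : ℕ) (π : Equiv.Perm (Fin m)) (x : Fin m → A) (y : Fin m → B),
      d m (x ∘ π) (y ∘ π) = d m x y) (D R : ℝ) (n : ℕ) :
    ∃ τ : RandCode (Fin (nn0 c * n) → A) (Fin (nMsg R (nn0 c * n)))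
      (Fin (nMsg R (nn0 c * n))) (Fin (nn0 c * n) → B),
      uSrcExcess c d D R n τ ≤ (1 - matchP c d D n) ^ nMsg R (nn0 c * n) := by
  obtain ⟨y, hy⟩ := exists_eq_ciSup_of_finite (f := fun y => ∑ u, uDist c n u *
    (if ((nn0 c * n : ℕ) : ℝ) * D < d (nn0 c * n) u y then (0 : ℝ) else 1))
  have hU : IsDist fun _ : Equiv.Perm (Fin (nn0 c * n)) =>
      (Fintype.card (Equiv.Perm (Fin (nn0 c * n))) : ℝ)⁻¹ := by
    refine ⟨fun _ => by positivity, ?_⟩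
    simp only [Finset.sum_const, Finset.card_univ, nsmul_eq_mul]
    exact mul_inv_cancel₀ (by exact_mod_cast Fintype.card_ne_zero)
  obtain ⟨τ, hτ⟩ := exists_source_code _ hU (fun π => y ∘ π)
    (fun u z => ((nn0 c * n : ℕ) : ℝ) * D < d (nn0 c * n) u z)
    (nMsg R (nn0 c * n)) (by unfold nMsg; positivity)
  refine ⟨τ, ?_⟩
  have hN : (0 : ℝ) < ((typeCl c n).card : ℝ) := by
    exact_mod_cast (typeCl_nonempty c n).card_pos
  have hbad : (∑ v ∈ typeCl c n,
      (if ((nn0 c * n : ℕ) : ℝ) * D < d (nn0 c * n) v y then (1 : ℝ) else 0))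
        / ((typeCl c n).card : ℝ) = 1 - matchP c d D n := by
    rw [← sum_uDist, matchP, ← hy, eq_sub_iff_add_eq, ← Finset.sum_add_distrib]
    refine Eq.trans (Finset.sum_congr rfl fun u _ => ?_) (isDist_uDist c n).2
    split_ifs <;> ring
  rw [uSrcExcess, div_le_iff₀ hN, mul_comm (_ ^ _),
    ← nsmul_eq_mul (typeCl c n).card]
  refine Finset.sum_le_card_nsmul _ _ _ fun u hu => (hτ u).trans_eq ?_
  rw [perm_average c n (fun u z =>
    if ((nn0 c * n : ℕ) : ℝ) * D < d (nn0 c * n) u z then (1 : ℝ) else 0)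
    (fun π x z => by simp only [hperm]) y hu, hbad]

lemma uSrcExcess_nonneg {A B : Type} [Fintype A] [DecidableEq A] [Fintype B] (c : A → ℕ)
    (d : ∀ m : ℕ, (Fin m → A) → (Fin m → B) → ℝ) (D R : ℝ) (n : ℕ)
    (τ : RandCode (Fin (nn0 c * n) → A) (Fin (nMsg R (nn0 c * n)))
      (Fin (nMsg R (nn0 c * n))) (Fin (nn0 c * n) → B)) : 0 ≤ uSrcExcess c d D R n τ := by
  refine div_nonneg (Finset.sum_nonneg fun u _ => Finset.sum_nonneg fun ef _ =>
    mul_nonneg (τ.isDist.1 ef) ?_) (Nat.cast_nonneg _)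
  split_ifs <;> norm_num

lemma nMsg_mul_le {R R' : ℝ} (hR : 0 ≤ R) (hRR : R ≤ R') (N : ℕ) :
    nMsg R N * 2 ^ ⌊(N : ℝ) * (R' - R)⌋₊ ≤ nMsg R' N := by
  rw [nMsg, nMsg, ← pow_add]
  refine Nat.pow_le_pow_right (by norm_num) (Nat.le_floor ?_)
  have h1 := Nat.floor_le (a := (N : ℝ) * R) (by positivity)
  have h2 := Nat.floor_le (a := (N : ℝ) * (R' - R))
    (mul_nonneg (Nat.cast_nonneg _) (sub_nonneg.2 hRR))
  push_cast
  linarith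

/-- If no sequence of rate-`R'` source codes has excess-distortion probabilities with `liminf`
zero, then `matchP` is at most of order `2 ^ (-n' R')`, hence `2 ^ (n' R) * matchP → 0` for `R < R'`. -/
lemma tendsto_matchP {A B : Type} [Fintype A] [DecidableEq A] [Fintype B] (c : A → ℕ)
    (hc : 0 < nn0 c) (d : ∀ m : ℕ, (Fin m → A) → (Fin m → B) → ℝ)
    (hperm : ∀ (m : ℕ) (π : Equiv.Perm (Fin m)) (x : Fin m → A) (y : Fin m → B),
      d m (x ∘ π) (y ∘ π) = d m x y) (D R R' : ℝ) (hR0 : 0 ≤ R) (hRR : R < R')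
    (hno : ∀ τ : ∀ n : ℕ, RandCode (Fin (nn0 c * n) → A) (Fin (nMsg R' (nn0 c * n)))
        (Fin (nMsg R' (nn0 c * n))) (Fin (nn0 c * n) → B),
      Filter.liminf (fun n => uSrcExcess c d D R' n (τ n)) atTop ≠ 0) :
    Tendsto (fun n => (nMsg R (nn0 c * n) : ℝ) * matchP c d D n) atTop (nhds 0) := by
  rcases isEmpty_or_nonempty B with hBe | hBn
  · refine tendsto_const_nhds.congr' ?_
    filter_upwards [eventually_ge_atTop 1] with n hn
    have : Nonempty (Fin (nn0 c * n)) := ⟨⟨0, Nat.mul_pos hc hn⟩⟩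
    rw [matchP, Real.iSup_of_isEmpty, mul_zero]
  choose τ hτ using fun n => exists_uSrc c d hperm D R' n
  have hq0 := matchP_nonneg c d D
  have hq1 : ∀ n, matchP c d D n ≤ 1 := fun n => Real.iSup_le (fun y => by
    refine le_of_le_of_eq (Finset.sum_le_sum fun u _ => ?_) (isDist_uDist c n).2
    have := (isDist_uDist c n).1 u
    split_ifs <;> linarith) zero_le_one
  have h0 : ∀ n, 0 ≤ uSrcExcess c d D R' n (τ n) := fun n => uSrcExcess_nonneg c d D R' n _
  have h1 : ∀ n, uSrcExcess c d D R' n (τ n) ≤ 1 := fun n =>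
    (hτ n).trans (pow_le_one₀ (by linarith [hq1 n]) (by linarith [hq0 n]))
  have hbb : IsBoundedUnder (· ≥ ·) atTop fun n => uSrcExcess c d D R' n (τ n) :=
    isBoundedUnder_of ⟨0, h0⟩
  have hba : IsBoundedUnder (· ≤ ·) atTop fun n => uSrcExcess c d D R' n (τ n) :=
    isBoundedUnder_of ⟨1, h1⟩
  have hpos : 0 < Filter.liminf (fun n => uSrcExcess c d D R' n (τ n)) atTop :=
    lt_of_le_of_ne (le_liminf_of_le hba.isCoboundedUnder_ge (Eventually.of_forall h0))
      (hno τ).symm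
  obtain ⟨ε, hε0, hε⟩ := exists_between hpos
  have hev := eventually_lt_of_lt_liminf hε hbb
  have hfl : Tendsto (fun n : ℕ => ⌊((nn0 c * n : ℕ) : ℝ) * (R' - R)⌋₊) atTop atTop := by
    refine tendsto_nat_floor_atTop.comp (Tendsto.atTop_mul_const (sub_pos.2 hRR) ?_)
    refine tendsto_natCast_atTop_atTop.comp ?_
    exact tendsto_id.const_mul_atTop' hc
  have hgeo : Tendsto (fun n : ℕ =>
      (-Real.log ε) * (1 / 2 : ℝ) ^ ⌊((nn0 c * n : ℕ) : ℝ) * (R' - R)⌋₊) atTop (nhds 0) := by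
    simpa using ((tendsto_pow_atTop_nhds_zero_of_lt_one (r := (1 / 2 : ℝ)) (by norm_num)
      (by norm_num)).comp hfl).const_mul (-Real.log ε)
  refine squeeze_zero' (Eventually.of_forall fun n =>
    mul_nonneg (Nat.cast_nonneg _) (hq0 n)) ?_ hgeo
  filter_upwards [hev] with n hn
  -- `ε < (1 - q) ^ M' ≤ exp (-q M')` bounds `q M'`.
  have hexp : (1 - matchP c d D n) ^ nMsg R' (nn0 c * n)
      ≤ Real.exp (nMsg R' (nn0 c * n) * (-matchP c d D n)) := by
    rw [Real.exp_nat_mul]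
    exact pow_le_pow_left₀ (by linarith [hq1 n]) (Real.one_sub_le_exp_neg _) _
  have hlog : Real.log ε ≤ nMsg R' (nn0 c * n) * (-matchP c d D n) := by
    rw [Real.log_le_iff_le_exp hε0]
    exact hn.le.trans ((hτ n).trans hexp)
  have hM : (nMsg R (nn0 c * n) : ℝ) * 2 ^ ⌊((nn0 c * n : ℕ) : ℝ) * (R' - R)⌋₊
      ≤ nMsg R' (nn0 c * n) := by
    exact_mod_cast nMsg_mul_le hR0 hRR.le (nn0 c * n)
  have h2 : (0 : ℝ) < 2 ^ ⌊((nn0 c * n : ℕ) : ℝ) * (R' - R)⌋₊ := by positivity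
  rw [one_div, inv_pow, ← div_eq_mul_inv, le_div_iff₀ h2]
  nlinarith [mul_le_mul_of_nonneg_right hM (hq0 n)]

/-- Random codes permitted; assume `R^P_U(D, inf) = R^P_U(D)`. If `D ≥ 0`
and the compound channel `𝒟` is capable of communicating the uniform `X` source (exact type
`p_X = c/n₀`, `n₀` least, i.e. `gcd c = 1`) to within distortion `D` under the
permutation-invariant distortion function `d`, then every rate `0 < R < R^P_U(D)` is reliably
achievable over `𝒟` with random codes. -/
theorem stmt4 (c : 𝒳 → ℕ) (hc : 0 < nn0 c) (hgcd : Finset.univ.gcd c = 1)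
    (d : ∀ m : ℕ, (Fin m → 𝒳) → (Fin m → 𝒴) → ℝ)
    (hd0 : ∀ m x y, 0 ≤ d m x y)
    (hperm : ∀ (m : ℕ) (π : Equiv.Perm (Fin m)) (x : Fin m → 𝒳) (y : Fin m → 𝒴),
      d m (x ∘ π) (y ∘ π) = d m x y)
    (D : ℝ) (hD : 0 ≤ D)
    (𝒟 : Set (Channel ℐ 𝒪))
    (heq : RPUinf c d D = RPU c d D)
    (hcap : UCanCommunicate 𝒟 c d D)
    (R : ℝ) (hR0 : 0 < R) (hR : ENNReal.ofReal R < RPU c d D) :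
    UReliablyAchievable 𝒟 c R := by
  -- A rate `R'` strictly between `R` and `R^P_U(D, inf)` is not achievable in the `inf` sense.
  obtain ⟨r, hRr, hr⟩ := exists_between hR
  have hrtop : r ≠ ⊤ := hr.ne_top
  have hRR : R < r.toReal := (ENNReal.ofReal_lt_iff_lt_toReal hR0.le hrtop).1 hRr
  have hno : ∀ τ : ∀ n : ℕ, RandCode (Fin (nn0 c * n) → 𝒳) (Fin (nMsg r.toReal (nn0 c * n)))
        (Fin (nMsg r.toReal (nn0 c * n))) (Fin (nn0 c * n) → 𝒴),
      Filter.liminf (fun n => uSrcExcess c d D r.toReal n (τ n)) atTop ≠ 0 := by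
    intro τ hτ
    rw [← heq] at hr
    exact absurd hr (not_lt.2 (sInf_le
      ⟨r.toReal, hR0.trans hRR, ⟨τ, hτ⟩, (ENNReal.ofReal_toReal hrtop).symm⟩))
  have hlim := tendsto_matchP c hc d hperm D R r.toReal hR0.le hRR hno
  obtain ⟨ρ, ω, hω, hρ⟩ := hcap
  choose σ hσ using fun n => exists_channel_code (uDist c n) (isDist_uDist c n)
    (fun u y => ((nn0 c * n : ℕ) : ℝ) * D < d (nn0 c * n) u y) (ρ n) (nMsg R (nn0 c * n))
    (matchP c d D n) (matchP_nonneg c d D n) (fun y => le_matchP c d D n y)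
  refine ⟨σ, fun n => ω n + nMsg R (nn0 c * n) * matchP c d D n, by simpa using hω.add hlim,
    fun n hn k hk m => ?_⟩
  refine (hσ n (k.k (nn0 c * n)) (k.isChan _) m).trans (add_le_add_left ?_ _)
  rw [sum_uDist]
  exact hρ n hn k hk

end
end

section
/- Assume random codes are permitted. Let D ≥ 0. If some rate R with R > R^P_U(D) is reliably achievable over the compound channel 𝒟 with random codes, then the uniform X source can be communicated to within distortion D over 𝒟 (probability-of-excess-distortion criterion, uniformly over k ∈ 𝒟) by a separation architecture, i.e., by encoder–decoder pairs of the form (e_s^{n'} ∘ e_c^{n'}, f_c^{n'} ∘ f_s^{n'}) composed of a source code for the uniform X source and a channel code. -/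
/-!
Since `R^P_U(D) < R`, some rate `R' < R` admits source codes whose excess-distortion probability
tends to `0`. There are at least as many messages at rate `R` as at rate `R'`, so these codes can
be regarded as rate-`R` codes with the same performance (`exists_uSrcExcess_eq`). Concatenate them
with the given channel codes. If the channel decoder recovers the message, the end-to-end
reproduction is that of the source code alone; hence, by the union bound (`sep_le_of_block`), the
excess-distortion probability is at most that of the source code plus the maximal channel error
probability. Both tend to `0` and neither depends on the channel.
-/

/-!
Statement 0: Optimality of separation, direct part (Part I, Theorem 1, first half).
If the compound channel 𝒜 can communicate the i.i.d. X source to within distortion D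
(probability-of-excess-distortion criterion, uniformly over k ∈ 𝒜, random codes allowed),
then every rate 0 < R < R^P_X(D) is reliably achievable over 𝒜 with random codes.
-/

open Finset Filter
open scoped ENNReal

noncomputable section

variable {𝒳 𝒴 ℐ 𝒪 : Type} [Fintype 𝒳] [DecidableEq 𝒳] [Fintype 𝒴]
  [Fintype ℐ] [Fintype 𝒪] [DecidableEq 𝒪]

/-- Probability of excess distortion of the separation architecture
`(e_s ∘ e_c, f_c ∘ f_s)` for the uniform `X` source: source code `τ`, channel code `σ`
(with `yerr` the reproduction emitted upon the channel decoder's error symbol), over channel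
`k`, at block length `n' = n₀ n`. -/
def uSepExcess (c : 𝒳 → ℕ) (d : ∀ m : ℕ, (Fin m → 𝒳) → (Fin m → 𝒴) → ℝ) (D R : ℝ) (n : ℕ)
    (τ : RandCode (Fin (nn0 c * n) → 𝒳) (Fin (nMsg R (nn0 c * n)))
      (Fin (nMsg R (nn0 c * n))) (Fin (nn0 c * n) → 𝒴))
    (σ : RandCode (Fin (nMsg R (nn0 c * n))) (Fin (nn0 c * n) → ℐ)
      (Fin (nn0 c * n) → 𝒪) (Option (Fin (nMsg R (nn0 c * n)))))
    (yerr : Fin (nn0 c * n) → 𝒴) (k : Channel ℐ 𝒪) : ℝ :=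
  (∑ u ∈ typeCl c n, ∑ sc, τ.p sc * ∑ cc, σ.p cc *
      ∑ o, k.k (nn0 c * n) (cc.1 (sc.1 u)) o *
        (if ((nn0 c * n : ℕ) : ℝ) * D <
            d (nn0 c * n) u ((cc.2 o).elim yerr sc.2) then 1 else 0))
    / ((typeCl c n).card : ℝ)

/-- Push-forward of a random code along a map `Φ` of deterministic encoder-decoder pairs. -/
def RandCode.map {A B C E A' B' C' E' : Type} [Fintype A] [DecidableEq A] [Fintype B]
    [Fintype C] [DecidableEq C] [Fintype E] [Fintype A'] [DecidableEq A'] [Fintype B']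
    [Fintype C'] [DecidableEq C'] [Fintype E']
    (τ : RandCode A B C E) (Φ : ((A → B) × (C → E)) → ((A' → B') × (C' → E'))) :
    RandCode A' B' C' E' where
  p := by classical exact fun b => ∑ a, if Φ a = b then τ.p a else 0
  isDist := by
    classical
    refine ⟨fun b => Finset.sum_nonneg fun a _ => ?_, ?_⟩
    · split_ifs
      · exact τ.isDist.1 a
      · exact le_rfl
    · rw [Finset.sum_comm]
      simpa using τ.isDist.2

/-- Change of variables: the expectation of `g` under the push-forward. -/
lemma RandCode.sum_map {A B C E A' B' C' E' : Type} [Fintype A] [DecidableEq A] [Fintype B]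
    [Fintype C] [DecidableEq C] [Fintype E] [Fintype A'] [DecidableEq A'] [Fintype B']
    [Fintype C'] [DecidableEq C'] [Fintype E']
    (τ : RandCode A B C E) (Φ : ((A → B) × (C → E)) → ((A' → B') × (C' → E')))
    (g : ((A' → B') × (C' → E')) → ℝ) :
    ∑ b, (τ.map Φ).p b * g b = ∑ a, τ.p a * g (Φ a) := by
  classical
  simp only [RandCode.map, Finset.sum_mul]
  rw [Finset.sum_comm]
  simp [ite_mul]

lemma nMsg_pos (R : ℝ) (n : ℕ) : 0 < nMsg R n := by
  unfold nMsg
  positivity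

lemma nMsg_mono {R R' : ℝ} (h : R' ≤ R) (n : ℕ) : nMsg R' n ≤ nMsg R n := by
  unfold nMsg
  gcongr
  norm_num

/-- A source code of rate `R'` is also a source code of any rate `R ≥ R'`: the surplus messages
are never used, and the decoder treats them as message `0`. -/
lemma exists_uSrcExcess_eq (c : 𝒳 → ℕ) (d : ∀ m : ℕ, (Fin m → 𝒳) → (Fin m → 𝒴) → ℝ)
    (D : ℝ) {R R' : ℝ} (h : R' ≤ R) (n : ℕ)
    (τ : RandCode (Fin (nn0 c * n) → 𝒳) (Fin (nMsg R' (nn0 c * n)))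
      (Fin (nMsg R' (nn0 c * n))) (Fin (nn0 c * n) → 𝒴)) :
    ∃ τ' : RandCode (Fin (nn0 c * n) → 𝒳) (Fin (nMsg R (nn0 c * n)))
      (Fin (nMsg R (nn0 c * n))) (Fin (nn0 c * n) → 𝒴),
      uSrcExcess c d D R n τ' = uSrcExcess c d D R' n τ := by
  refine ⟨τ.map fun ef => (fun u => Fin.castLE (nMsg_mono h _) (ef.1 u),
    fun m => ef.2 (if hm : m.1 < nMsg R' (nn0 c * n) then ⟨m.1, hm⟩ else ⟨0, nMsg_pos _ _⟩)), ?_⟩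
  unfold uSrcExcess
  congr 1
  refine Finset.sum_congr rfl fun u _ => ?_
  rw [RandCode.sum_map τ _ fun ef : ((Fin (nn0 c * n) → 𝒳) → Fin (nMsg R (nn0 c * n))) ×
      (Fin (nMsg R (nn0 c * n)) → Fin (nn0 c * n) → 𝒴) =>
    if ((nn0 c * n : ℕ) : ℝ) * D < d (nn0 c * n) u (ef.2 (ef.1 u)) then (1 : ℝ) else 0]
  simp

/-- A random code has at least one deterministic pair, because its weights sum to `1`. -/
lemma RandCode.nonempty {A B C E : Type} [Fintype A] [DecidableEq A] [Fintype B]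
    [Fintype C] [DecidableEq C] [Fintype E] (τ : RandCode A B C E) :
    Nonempty ((A → B) × (C → E)) := by
  by_contra hne
  rw [not_nonempty_iff] at hne
  simpa using τ.isDist.2

/-- Union bound, for a fixed source block `u`: excess distortion of the separation architecture
requires excess distortion of the source code or a channel decoding error. -/
lemma sep_le_of_block (c : 𝒳 → ℕ) (d : ∀ m : ℕ, (Fin m → 𝒳) → (Fin m → 𝒴) → ℝ)
    (D R : ℝ) (n : ℕ)
    (τ : RandCode (Fin (nn0 c * n) → 𝒳) (Fin (nMsg R (nn0 c * n)))
      (Fin (nMsg R (nn0 c * n))) (Fin (nn0 c * n) → 𝒴))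
    (σ : RandCode (Fin (nMsg R (nn0 c * n))) (Fin (nn0 c * n) → ℐ)
      (Fin (nn0 c * n) → 𝒪) (Option (Fin (nMsg R (nn0 c * n)))))
    (yerr : Fin (nn0 c * n) → 𝒴) (k : Channel ℐ 𝒪) (δ : ℝ)
    (hδ : ∀ m, chErr R (nn0 c * n) σ k m ≤ δ) (u : Fin (nn0 c * n) → 𝒳) :
    (∑ sc, τ.p sc * ∑ cc, σ.p cc *
      ∑ o, k.k (nn0 c * n) (cc.1 (sc.1 u)) o *
        (if ((nn0 c * n : ℕ) : ℝ) * D <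
            d (nn0 c * n) u ((cc.2 o).elim yerr sc.2) then (1 : ℝ) else 0)) ≤
    (∑ ef, τ.p ef *
      (if ((nn0 c * n : ℕ) : ℝ) * D < d (nn0 c * n) u (ef.2 (ef.1 u)) then (1 : ℝ) else 0))
      + δ := by
  have hδ' : δ = ∑ sc, τ.p sc * δ := by rw [← Finset.sum_mul, τ.isDist.2, one_mul]
  rw [hδ', ← Finset.sum_add_distrib]
  refine Finset.sum_le_sum fun sc _ => ?_
  rw [← mul_add]
  refine mul_le_mul_of_nonneg_left ?_ (τ.isDist.1 sc)
  refine le_trans ?_ (add_le_add_right (hδ (sc.1 u)) _)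
  set I : ℝ :=
    if ((nn0 c * n : ℕ) : ℝ) * D < d (nn0 c * n) u (sc.2 (sc.1 u)) then (1 : ℝ) else 0 with hI
  have hI0 : 0 ≤ I := by rw [hI]; split_ifs <;> norm_num
  have hI' : I = ∑ cc, σ.p cc * I := by rw [← Finset.sum_mul, σ.isDist.2, one_mul]
  unfold chErr
  rw [hI', ← Finset.sum_add_distrib]
  refine Finset.sum_le_sum fun cc _ => ?_
  rw [← mul_add]
  refine mul_le_mul_of_nonneg_left ?_ (σ.isDist.1 cc)
  have hk := k.isChan (nn0 c * n) (cc.1 (sc.1 u))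
  have hI'' : I = ∑ o, k.k (nn0 c * n) (cc.1 (sc.1 u)) o * I := by
    rw [← Finset.sum_mul, hk.2, one_mul]
  rw [hI'', ← Finset.sum_add_distrib]
  refine Finset.sum_le_sum fun o _ => ?_
  rw [← mul_add]
  refine mul_le_mul_of_nonneg_left ?_ (hk.1 o)
  by_cases ho : cc.2 o = some (sc.1 u)
  · simp [ho, hI]
  · rw [if_neg ho]
    split_ifs <;> linarith

/-- Random codes permitted, `D ≥ 0`. If some rate `R > R^P_U(D)` is reliably
achievable over the compound channel `𝒟` with random codes, then the uniform `X` source can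
be communicated to within distortion `D` over `𝒟` (probability-of-excess-distortion
criterion, uniformly over `k ∈ 𝒟`) by a separation architecture composed of a source code for
the uniform `X` source and a channel code. -/
theorem stmt5 (c : 𝒳 → ℕ) (hc : 0 < nn0 c) (hgcd : Finset.univ.gcd c = 1)
    (d : ∀ m : ℕ, (Fin m → 𝒳) → (Fin m → 𝒴) → ℝ)
    (hd0 : ∀ m x y, 0 ≤ d m x y)
    (hperm : ∀ (m : ℕ) (π : Equiv.Perm (Fin m)) (x : Fin m → 𝒳) (y : Fin m → 𝒴),
      d m (x ∘ π) (y ∘ π) = d m x y)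
    (D : ℝ) (hD : 0 ≤ D)
    (𝒟 : Set (Channel ℐ 𝒪))
    (R : ℝ) (hR0 : 0 < R) (hR : RPU c d D < ENNReal.ofReal R)
    (hach : UReliablyAchievable 𝒟 c R) :
    ∃ (τ : ∀ n : ℕ, RandCode (Fin (nn0 c * n) → 𝒳) (Fin (nMsg R (nn0 c * n)))
        (Fin (nMsg R (nn0 c * n))) (Fin (nn0 c * n) → 𝒴))
      (σ : ∀ n : ℕ, RandCode (Fin (nMsg R (nn0 c * n))) (Fin (nn0 c * n) → ℐ)
        (Fin (nn0 c * n) → 𝒪) (Option (Fin (nMsg R (nn0 c * n)))))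
      (yerr : ∀ n : ℕ, Fin (nn0 c * n) → 𝒴) (ω : ℕ → ℝ),
      Tendsto ω atTop (nhds 0) ∧
      ∀ n : ℕ, 1 ≤ n → ∀ k ∈ 𝒟,
        uSepExcess c d D R n (τ n) (σ n) (yerr n) k ≤ ω n := by
  obtain ⟨r, ⟨R', -, ⟨τ', hτ'⟩, rfl⟩, hr⟩ := sInf_lt_iff.1 hR
  have hRR : R' ≤ R := ((ENNReal.ofReal_lt_ofReal_iff hR0).1 hr).le
  choose τ hτ using fun n => exists_uSrcExcess_eq c d D hRR n (τ' n)
  obtain ⟨σ, δ, hδ, hσ⟩ := hach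
  -- Message `0` decoded by any deterministic pair of the source code serves as `yerr`.
  refine ⟨τ, σ, fun n => (Classical.choice (τ n).nonempty).2 ⟨0, nMsg_pos _ _⟩,
    fun n => uSrcExcess c d D R n (τ n) + δ n, ?_, fun n hn k hk => ?_⟩
  · simp only [hτ]
    simpa using hτ'.add hδ
  · have hm := hσ n hn k hk
    have hδ0 : 0 ≤ δ n := by
      refine le_trans ?_ (hm ⟨0, nMsg_pos _ _⟩)
      refine Finset.sum_nonneg fun ef _ => mul_nonneg ((σ n).isDist.1 ef) ?_
      refine Finset.sum_nonneg fun o _ => mul_nonneg ((k.isChan _ _).1 o) ?_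
      split_ifs <;> norm_num
    unfold uSepExcess uSrcExcess
    refine (div_le_div_of_nonneg_right (Finset.sum_le_sum fun u _ =>
      sep_le_of_block c d D R n (τ n) (σ n) _ k (δ n) hm u) (Nat.cast_nonneg _)).trans ?_
    rw [Finset.sum_add_distrib, add_div, Finset.sum_const, nsmul_eq_mul]
    -- Equality if the type class is nonempty; for an empty one the quotient is `0`.
    refine add_le_add_right (div_le_of_le_mul₀ (Nat.cast_nonneg _) hδ0 ?_) _
    rw [mul_comm]


end
end
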